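/- Let P ∈ ℝ^{m×(L+1)p} satisfy P · I_L = [I_m, 0], and define Ã := A − B P O_L and C̃ := −P O_L. Assume the pair (A, C) is observable, i.e., the only ξ ∈ ℝⁿ with C A^k ξ = 0 for all k = 0,…,n−1 is ξ = 0, and let N ≥ n. Then if ξ ∈ V₀ satisfies C̃ Ã^k ξ = 0 for all k = 0,…,N−1, it follows that ξ = 0. Equivalently, letting Õ_{N−1} ∈ ℝ^{Nm×n} be the matrix with block rows C̃ Ã^k, k = 0,…,N−1, one has V₀ ∩ ker(Õ_{N−1}) = {0}. -/

import Mathlib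

open Matrix

/-- Block observability matrix `O_L` with block rows `C A^k`, `k = 0,…,L`. -/
noncomputable def obsMat {n p : ℕ} (A : Matrix (Fin n) (Fin n) ℝ)
    (C : Matrix (Fin p) (Fin n) ℝ) (L : ℕ) :
    Matrix (Fin (L + 1) × Fin p) (Fin n) ℝ :=
  fun kr j => (C * A ^ (kr.1 : ℕ)) kr.2 j

/-- Block invertibility (Toeplitz) matrix `I_L` of the LTI system `(A,B,C,D)`. -/
noncomputable def invMat {n m p : ℕ} (A : Matrix (Fin n) (Fin n) ℝ)
    (B : Matrix (Fin n) (Fin m) ℝ) (C : Matrix (Fin p) (Fin n) ℝ)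
    (D : Matrix (Fin p) (Fin m) ℝ) (L : ℕ) :
    Matrix (Fin (L + 1) × Fin p) (Fin (L + 1) × Fin m) ℝ :=
  fun jr ic =>
    if (jr.1 : ℕ) = (ic.1 : ℕ) then D jr.2 ic.2
    else if (ic.1 : ℕ) < (jr.1 : ℕ) then
      (C * A ^ ((jr.1 : ℕ) - (ic.1 : ℕ) - 1) * B) jr.2 ic.2
    else 0

/-- The block matrix `[I_m, 0] ∈ ℝ^{m × (L+1)m}`. -/
noncomputable def idZero (m L : ℕ) : Matrix (Fin m) (Fin (L + 1) × Fin m) ℝ :=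
  fun r ic => if (ic.1 : ℕ) = 0 ∧ r = ic.2 then 1 else 0

/-- The state sequence of `x_{k+1} = A x_k + B u_k` from initial state `ξ`. -/
noncomputable def stateSeq {n m : ℕ} (A : Matrix (Fin n) (Fin n) ℝ)
    (B : Matrix (Fin n) (Fin m) ℝ) (ξ : Fin n → ℝ) (u : ℕ → Fin m → ℝ) :
    ℕ → Fin n → ℝ
  | 0 => ξ
  | k + 1 => A.mulVec (stateSeq A B ξ u k) + B.mulVec (u k)

/-- The output-nulling subspace `V₀`: states from which some input sequence keeps the
output `y_k = C x_k + D u_k` identically zero. -/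
def outputNulling {n m p : ℕ} (A : Matrix (Fin n) (Fin n) ℝ)
    (B : Matrix (Fin n) (Fin m) ℝ) (C : Matrix (Fin p) (Fin n) ℝ)
    (D : Matrix (Fin p) (Fin m) ℝ) : Set (Fin n → ℝ) :=
  {ξ | ∃ u : ℕ → Fin m → ℝ, ∀ k, C.mulVec (stateSeq A B ξ u k) + D.mulVec (u k) = 0}

theorem state_shift {n m : ℕ} (A : Matrix (Fin n) (Fin n) ℝ) (B : Matrix (Fin n) (Fin m) ℝ)
    (x : ℕ → Fin n → ℝ) (u : ℕ → Fin m → ℝ)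
    (hx : ∀ k, x (k + 1) = A *ᵥ x k + B *ᵥ u k) (k j : ℕ) :
    x (k + j) = (A ^ j) *ᵥ x k
      + ∑ i ∈ Finset.range j, (A ^ (j - i - 1) * B) *ᵥ u (k + i) := by
  induction j with
  | zero => simp
  | succ j ih =>
    rw [← add_assoc, hx, ih, Finset.sum_range_succ, mulVec_add, mulVec_mulVec, ← pow_succ',
      mulVec_sum, add_assoc]
    congr 2
    · apply Finset.sum_congr rfl
      intro i hi
      have hi := Finset.mem_range.1 hi
      rw [mulVec_mulVec, ← Matrix.mul_assoc, ← pow_succ']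
      congr 3
      omega
    · simp

theorem invMat_mulVec {n m p L : ℕ} (A : Matrix (Fin n) (Fin n) ℝ)
    (B : Matrix (Fin n) (Fin m) ℝ) (C : Matrix (Fin p) (Fin n) ℝ)
    (D : Matrix (Fin p) (Fin m) ℝ) (v : ℕ → Fin m → ℝ) (j : Fin (L + 1)) (r : Fin p) :
    (invMat A B C D L *ᵥ (fun ic => v ic.1 ic.2)) (j, r)
      = (∑ i ∈ Finset.range j, (C * A ^ ((j : ℕ) - i - 1) * B) *ᵥ v i + D *ᵥ v j) r := by
  have h1 : (invMat A B C D L *ᵥ (fun ic => v ic.1 ic.2)) (j, r)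
      = ∑ i : Fin (L + 1), (if (j : ℕ) = (i : ℕ) then (D *ᵥ v i) r
        else if (i : ℕ) < j then ((C * A ^ ((j : ℕ) - i - 1) * B) *ᵥ v i) r else 0) := by
    rw [mulVec, dotProduct, Fintype.sum_prod_type]
    apply Finset.sum_congr rfl
    intro i _
    simp only [invMat, mulVec, dotProduct]
    split_ifs <;> simp
  rw [h1, Fin.sum_univ_eq_sum_range (fun i => (if (j : ℕ) = i then (D *ᵥ v i) r
        else if i < j then ((C * A ^ ((j : ℕ) - i - 1) * B) *ᵥ v i) r else 0)) (L + 1)]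
  rw [← Finset.sum_subset (Finset.range_subset_range.2 (Nat.succ_le_of_lt j.2)),
    Finset.sum_range_succ]
  · simp only [Pi.add_apply, Finset.sum_apply, if_true]
    congr 1
    apply Finset.sum_congr rfl
    intro i hi
    have hi := Finset.mem_range.1 hi
    rw [if_neg (by omega), if_pos hi]
  · intro i _ hi
    have hi : ¬ i < j + 1 := fun h => hi (Finset.mem_range.2 h)
    rw [if_neg (by omega), if_neg (by omega)]

theorem idZero_mulVec {m L : ℕ} (v : ℕ → Fin m → ℝ) :
    idZero m L *ᵥ (fun ic => v ic.1 ic.2) = v 0 := by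
  ext r
  rw [mulVec, dotProduct, Fintype.sum_prod_type, Fin.sum_univ_succ]
  simp [idZero]

theorem input_eq {n m p L : ℕ} (A : Matrix (Fin n) (Fin n) ℝ)
    (B : Matrix (Fin n) (Fin m) ℝ) (C : Matrix (Fin p) (Fin n) ℝ)
    (D : Matrix (Fin p) (Fin m) ℝ) (P : Matrix (Fin m) (Fin (L + 1) × Fin p) ℝ)
    (hP : P * invMat A B C D L = idZero m L)
    (x : ℕ → Fin n → ℝ) (u : ℕ → Fin m → ℝ)
    (hx : ∀ k, x (k + 1) = A *ᵥ x k + B *ᵥ u k)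
    (hy : ∀ k, C *ᵥ x k + D *ᵥ u k = 0) (k : ℕ) :
    u k = (-(P * obsMat A C L)) *ᵥ x k := by
  have h : obsMat A C L *ᵥ x k
      + invMat A B C D L *ᵥ (fun ic => u (k + ic.1) ic.2) = 0 := by
    ext ⟨j, r⟩
    have h2 := congrFun (hy (k + j)) r
    rw [state_shift A B x u hx k j, mulVec_add, mulVec_mulVec, mulVec_sum] at h2
    rw [Pi.add_apply, invMat_mulVec A B C D (fun i => u (k + i)) j r]
    simp only [mulVec_mulVec, ← Matrix.mul_assoc] at h2
    rw [add_assoc, Pi.add_apply] at h2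
    exact h2
  have h3 := congrArg (fun z => P *ᵥ z) h
  simp only [mulVec_add, mulVec_mulVec, mulVec_zero, hP] at h3
  rw [idZero_mulVec (fun i => u (k + i))] at h3
  rw [neg_mulVec]
  exact eq_neg_of_add_eq_zero_right h3

/-- If `(A, C)` is observable, `N ≥ n`, `P I_L = [I_m, 0]`, `Ã := A - B P O_L`,
`C̃ := -P O_L`, then the only `ξ ∈ V₀` with `C̃ Ã^k ξ = 0` for `k = 0,…,N-1` is `ξ = 0`;
i.e. `V₀ ∩ ker Õ_{N-1} = {0}`. -/
theorem outputNulling_inter_ker_tilde_obs_eq_bot {n m p L N : ℕ}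
    (A : Matrix (Fin n) (Fin n) ℝ) (B : Matrix (Fin n) (Fin m) ℝ)
    (C : Matrix (Fin p) (Fin n) ℝ) (D : Matrix (Fin p) (Fin m) ℝ)
    (P : Matrix (Fin m) (Fin (L + 1) × Fin p) ℝ)
    (hP : P * invMat A B C D L = idZero m L)
    (hobs : ∀ ξ : Fin n → ℝ, (∀ k < n, (C * A ^ k).mulVec ξ = 0) → ξ = 0)
    (hN : n ≤ N) :
    ∀ ξ ∈ outputNulling A B C D,
      (∀ k < N, ((-(P * obsMat A C L)) * (A - B * P * obsMat A C L) ^ k).mulVec ξ = 0) →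
      ξ = 0 := by
  rintro ξ ⟨u, hy⟩ hk
  have hx : ∀ k, stateSeq A B ξ u (k + 1) = A *ᵥ stateSeq A B ξ u k + B *ᵥ u k := fun _ => rfl
  have hu := input_eq A B C D P hP _ u hx hy
  have hs : ∀ k, stateSeq A B ξ u k = ((A - B * P * obsMat A C L) ^ k) *ᵥ ξ := by
    intro k
    induction k with
    | zero => simp [stateSeq]
    | succ k ih =>
      rw [hx, hu, pow_succ', ← mulVec_mulVec, ← ih, sub_mulVec, mulVec_mulVec, Matrix.mul_neg,
        neg_mulVec, ← Matrix.mul_assoc, sub_eq_add_neg]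
  have hu0 : ∀ k < N, u k = 0 := by
    intro k hkN
    rw [hu, hs, mulVec_mulVec]
    exact hk k hkN
  apply hobs
  intro k hkn
  have h := hy k
  have h2 := state_shift A B _ u hx 0 k
  rw [Finset.sum_eq_zero, add_zero, zero_add] at h2
  · rw [hu0 k (by omega), mulVec_zero, add_zero, h2, mulVec_mulVec] at h
    exact h
  · intro i hi
    have hi := Finset.mem_range.1 hi
    rw [zero_add, hu0 i (by omega), mulVec_zero]
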